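/- Let Φ, Φ̃ : ℂⁿ → ℝ be strictly plurisubharmonic quadratic forms with Φ̃ ≤ Φ pointwise, let κ♭ : ℂⁿ → ℂⁿ be an ℝ-linear isomorphism, let â ∈ ℂ, and let Ψ be a holomorphic quadratic form on ℂ^{2n} such that 2 Re Ψ(z, w̄) = Φ̃(z) + Φ(w) − R(z, w) for all z, w ∈ ℂⁿ, where R is a nonnegative quadratic form on ℂⁿ × ℂⁿ satisfying c|z − κ♭(w)|² ≤ R(z, w) ≤ C|z − κ♭(w)|² for some C, c > 0. Let u be an entire function with |u(w)| ≤ C₀⟨w⟩^{N} e^{Φ(w)} on ℂⁿ for some C₀ > 0, N ∈ ℝ, and set G u(z) = â ∫_{ℂⁿ} e^{2Ψ(z,w̄)} u(w) e^{-2Φ(w)} dL(w). Then WF^{1/2}_Φ(Gu) ⊆ κ♭(WF^{1/2}_Φ(u)) ∩ Rad(Φ − Φ̃), where Rad(Φ − Φ̃) = {z ∈ ℂⁿ : Φ(z) − Φ̃(z) = 0}. -/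

import Mathlib

open Matrix MeasureTheory ENNReal

noncomputable section

/-- The squared Euclidean norm `|z|²` on `ℂⁿ`. -/
def eSq {n : ℕ} (z : Fin n → ℂ) : ℝ := ∑ i, Complex.normSq (z i)

/-- The Japanese bracket `⟨z⟩ = (1 + |z|²)^{1/2}`. -/
def jb {n : ℕ} (z : Fin n → ℂ) : ℝ := Real.sqrt (1 + eSq z)

/-- `Φ : ℂⁿ → ℝ` is a (real) quadratic form of the underlying real coordinates. -/
def IsRQuad {n : ℕ} (Φ : (Fin n → ℂ) → ℝ) : Prop :=
  ∃ B : (Fin n → ℂ) →ₗ[ℝ] (Fin n → ℂ) →ₗ[ℝ] ℝ, ∀ z, Φ z = B z z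

/-- `Φ : ℂⁿ → ℝ` is a strictly plurisubharmonic quadratic form.  For a quadratic form `Φ`,
the Levi form satisfies `(∂²_{z z̄}Φ) w ⋅ w̄ = (Φ(w) + Φ(i w))/2`, so positive definiteness of
the Levi matrix is equivalent to `Φ(w) + Φ(i·w) > 0` for all `w ≠ 0`. -/
def IsSPSH {n : ℕ} (Φ : (Fin n → ℂ) → ℝ) : Prop :=
  IsRQuad Φ ∧ ∀ z : Fin n → ℂ, z ≠ 0 → 0 < Φ z + Φ (Complex.I • z)

/-- The squared weighted norm `‖u‖_s² = ∫ |u(z)|² ⟨z⟩^{2s} e^{-2Φ(z)} L(dz)` (in `ℝ≥0∞`). -/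
def hnorm {n : ℕ} (Φ : (Fin n → ℂ) → ℝ) (s : ℝ) (u : (Fin n → ℂ) → ℂ) : ℝ≥0∞ :=
  ∫⁻ z : Fin n → ℂ, (‖u z‖₊ : ℝ≥0∞) ^ 2 * ENNReal.ofReal (jb z ^ (2 * s) * Real.exp (-2 * Φ z))

/-- A conic subset of `ℂⁿ`. -/
def IsConic {n : ℕ} (V : Set (Fin n → ℂ)) : Prop := ∀ z ∈ V, ∀ t : ℝ, 0 < t → t • z ∈ V

/-- The `1/2`-Gelfand–Shilov wavefront set of `u` relative to `Φ`: the complement in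
`ℂⁿ∖{0}` of the points having an open conic neighborhood in `ℂⁿ∖{0}` on which
`|u(z)| ≤ C e^{Φ(z) - c|z|²}`. -/
def wf {n : ℕ} (Φ : (Fin n → ℂ) → ℝ) (u : (Fin n → ℂ) → ℂ) : Set (Fin n → ℂ) :=
  {z₀ | z₀ ≠ 0 ∧ ¬ ∃ V : Set (Fin n → ℂ), IsOpen V ∧ IsConic V ∧ (0 : Fin n → ℂ) ∉ V ∧ z₀ ∈ V ∧
      ∃ C c : ℝ, 0 < C ∧ 0 < c ∧ ∀ z ∈ V, ‖u z‖ ≤ C * Real.exp (Φ z - c * eSq z)}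

/-- A holomorphic quadratic form on `ℂ^{2n} = ℂⁿ_z × ℂⁿ_θ`. -/
def IsCQuad2 {n : ℕ} (Ψ : (Fin n → ℂ) → (Fin n → ℂ) → ℂ) : Prop :=
  ∃ B : ((Fin n → ℂ) × (Fin n → ℂ)) →ₗ[ℂ] ((Fin n → ℂ) × (Fin n → ℂ)) →ₗ[ℂ] ℂ,
    ∀ z θ, Ψ z θ = B (z, θ) (z, θ)

/-- A real quadratic form on `ℂⁿ × ℂⁿ` viewed as a real vector space. -/
def IsRQuadPair {n : ℕ} (R : (Fin n → ℂ) → (Fin n → ℂ) → ℝ) : Prop :=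
  ∃ B : ((Fin n → ℂ) × (Fin n → ℂ)) →ₗ[ℝ] ((Fin n → ℂ) × (Fin n → ℂ)) →ₗ[ℝ] ℝ,
    ∀ z w, R z w = B (z, w) (z, w)

/-- The Bergman-form integral operator
`G u (z) = a ∫ e^{2Ψ(z, w̄)} u(w) e^{-2Φ(w)} L(dw)`. -/
def berg {n : ℕ} (a : ℂ) (Ψ : (Fin n → ℂ) → (Fin n → ℂ) → ℂ) (Φ : (Fin n → ℂ) → ℝ)
    (u : (Fin n → ℂ) → ℂ) (z : Fin n → ℂ) : ℂ :=
  a * ∫ w : Fin n → ℂ, Complex.exp (2 * Ψ z (star w)) * u w * (Real.exp (-2 * Φ w) : ℂ)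

lemma eSq_nonneg {n : ℕ} (z : Fin n → ℂ) : 0 ≤ eSq z :=
  Finset.sum_nonneg fun i _ => Complex.normSq_nonneg _

lemma eSq_pos {n : ℕ} {z : Fin n → ℂ} (hz : z ≠ 0) : 0 < eSq z := by
  obtain ⟨i, hi⟩ := Function.ne_iff.mp hz
  exact Finset.sum_pos' (fun i _ => Complex.normSq_nonneg _)
    ⟨i, Finset.mem_univ _, Complex.normSq_pos.mpr hi⟩

lemma eSq_cont {n : ℕ} : Continuous (eSq (n := n)) := by
  unfold eSq
  exact continuous_finset_sum _ fun i _ => Complex.continuous_normSq.comp (continuous_apply i)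

lemma eSq_smul {n : ℕ} (t : ℝ) (z : Fin n → ℂ) : eSq (t • z) = t ^ 2 * eSq z := by
  unfold eSq
  rw [Finset.mul_sum]
  refine Finset.sum_congr rfl fun i _ => ?_
  rw [Pi.smul_apply, Complex.real_smul, Complex.normSq_mul, Complex.normSq_ofReal]
  ring

lemma eSq_le {n : ℕ} (z : Fin n → ℂ) : eSq z ≤ n * ‖z‖ ^ 2 := by
  unfold eSq
  calc _ ≤ ∑ i : Fin n, ‖z‖ ^ 2 := Finset.sum_le_sum fun i _ => by
        rw [Complex.normSq_eq_norm_sq]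
        exact pow_le_pow_left₀ (norm_nonneg _) (norm_le_pi_norm z i) 2
    _ = _ := by simp

lemma rquad_cont {n : ℕ} {Φ : (Fin n → ℂ) → ℝ} (h : IsRQuad Φ) : Continuous Φ := by
  obtain ⟨B, hB⟩ := h
  have : Φ = fun z => ((LinearMap.toContinuousLinearMap (𝕜 := ℝ) (E := Fin n → ℂ) (F' := ℝ)).toLinearMap ∘ₗ B) z z := by
    funext z; simp [hB]
  rw [this]
  exact (LinearMap.continuous_of_finiteDimensional _).clm_apply continuous_id

lemma rquad_smul {n : ℕ} {Φ : (Fin n → ℂ) → ℝ} (h : IsRQuad Φ) (t : ℝ) (z : Fin n → ℂ) :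
    Φ (t • z) = t ^ 2 * Φ z := by
  obtain ⟨B, hB⟩ := h
  simp [hB]; ring

lemma gauss_int {n : ℕ} {ε : ℝ} (hε : 0 < ε) :
    Integrable (fun w : Fin n → ℂ => Real.exp (-ε * eSq w)) := by
  have h1 : Integrable (fun w : ℂ => Real.exp (-ε * ‖w‖ ^ 2)) := by
    have := (GaussianFourier.integrable_cexp_neg_mul_sq_norm_add (V := ℂ) (b := (ε : ℂ))
      (by simpa using hε) 0 0).norm
    refine this.congr (Filter.Eventually.of_forall fun w => ?_)
    simp [Complex.norm_exp, ← Complex.ofReal_pow]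
  have h2 : Integrable (fun w : Fin n → ℂ => ∏ i, Real.exp (-ε * ‖w i‖ ^ 2)) :=
    Integrable.fintype_prod (f := fun (_ : Fin n) (w : ℂ) => Real.exp (-ε * ‖w‖ ^ 2)) (fun _ => h1)
  refine h2.congr (Filter.Eventually.of_forall fun w => ?_)
  simp only [eSq, Complex.normSq_eq_norm_sq, Finset.mul_sum, Real.exp_sum]

/-- lower bound on closed cones -/
lemma cone_bound {n : ℕ} (K : Set ((Fin n → ℂ) × (Fin n → ℂ))) (hK : IsClosed K)
    (hKc : ∀ p ∈ K, ∀ t : ℝ, 0 < t → t • p ∈ K) (F : (Fin n → ℂ) × (Fin n → ℂ) → ℝ)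
    (hF : Continuous F) (hFs : ∀ (t : ℝ) p, F (t • p) = t ^ 2 * F p)
    (hpos : ∀ p ∈ K, p ≠ 0 → 0 < F p) :
    ∃ ε : ℝ, 0 < ε ∧ ∀ p ∈ K, ε * (eSq p.1 + eSq p.2) ≤ F p := by
  have hcomp : IsCompact (K ∩ Metric.sphere 0 1) := (isCompact_sphere _ _).inter_left hK
  obtain ⟨m, hm, hmF⟩ : ∃ m : ℝ, 0 < m ∧ ∀ p ∈ K ∩ Metric.sphere 0 1, m ≤ F p := by
    rcases (K ∩ Metric.sphere 0 1).eq_empty_or_nonempty with he | hne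
    · exact ⟨1, one_pos, by simp [he]⟩
    · obtain ⟨q, hq, hmin⟩ := hcomp.exists_isMinOn hne hF.continuousOn
      refine ⟨F q, hpos q hq.1 ?_, fun p hp => hmin hp⟩
      rintro rfl
      simpa using hq.2
  refine ⟨m / (2 * n + 1), by positivity, fun p hp => ?_⟩
  by_cases hp0 : p = 0
  · subst hp0
    have h0 : F 0 = 0 := by simpa using hFs 0 0
    have h1 : eSq (0 : Fin n → ℂ) = 0 := by simp [eSq]
    simp [h0, h1]
  · have hn : 0 < ‖p‖ := norm_pos_iff.mpr hp0
    have h1 := hmF (‖p‖⁻¹ • p) ⟨hKc p hp _ (inv_pos.mpr hn), by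
      simp [norm_smul, hn.ne']⟩
    rw [hFs] at h1
    have h2 : m * ‖p‖ ^ 2 ≤ F p := by
      have := mul_le_mul_of_nonneg_right h1 (sq_nonneg ‖p‖)
      have h3 : ‖p‖⁻¹ ^ 2 * F p * ‖p‖ ^ 2 = F p := by field_simp
      linarith
    have h3 : eSq p.1 + eSq p.2 ≤ (2 * n + 1) * ‖p‖ ^ 2 := by
      have a1 := eSq_le p.1
      have a2 := eSq_le p.2
      have b1 : ‖p.1‖ ^ 2 ≤ ‖p‖ ^ 2 := pow_le_pow_left₀ (norm_nonneg _) (norm_fst_le p) 2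
      have b2 : ‖p.2‖ ^ 2 ≤ ‖p‖ ^ 2 := pow_le_pow_left₀ (norm_nonneg _) (norm_snd_le p) 2
      have hn0 : (0 : ℝ) ≤ n := Nat.cast_nonneg n
      nlinarith [mul_le_mul_of_nonneg_left b1 hn0, mul_le_mul_of_nonneg_left b2 hn0]
    calc m / (2 * n + 1) * (eSq p.1 + eSq p.2)
        ≤ m / (2 * n + 1) * ((2 * n + 1) * ‖p‖ ^ 2) := by gcongr
      _ = m * ‖p‖ ^ 2 := by field_simp
      _ ≤ _ := h2

lemma jb_bound {n : ℕ} (N ε : ℝ) (hε : 0 < ε) :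
    ∃ A : ℝ, 0 < A ∧ ∀ w : Fin n → ℂ, jb w ^ N ≤ A * Real.exp (ε * eSq w) := by
  set η := ε / (|N| + 1) with hη
  have hNp : 0 < |N| + 1 := by positivity
  have hη0 : 0 < η := by positivity
  have hηN : |N| * η ≤ ε := by
    have : (|N| + 1) * η = ε := by rw [hη]; field_simp
    linarith
  refine ⟨Real.exp (|N| * (η + |Real.log η|)), Real.exp_pos _, fun w => ?_⟩
  have hs := eSq_nonneg w
  have h1 : 0 < 1 + eSq w := by linarith
  have hj : 0 < jb w := Real.sqrt_pos.mpr h1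
  rw [Real.rpow_def_of_pos hj, ← Real.exp_add]
  apply Real.exp_le_exp.mpr
  have hlog : Real.log (jb w) = Real.log (1 + eSq w) / 2 := Real.log_sqrt h1.le
  have hl0 : 0 ≤ Real.log (1 + eSq w) := Real.log_nonneg (by linarith)
  have h2 : Real.log (1 + eSq w) ≤ η * (1 + eSq w) + |Real.log η| := by
    have a := Real.log_le_sub_one_of_pos (mul_pos hη0 h1)
    rw [Real.log_mul hη0.ne' h1.ne'] at a
    have := neg_abs_le (Real.log η)
    linarith
  rw [hlog]
  have h3 : Real.log (1 + eSq w) / 2 * N ≤ Real.log (1 + eSq w) * |N| := by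
    have := le_abs_self N
    have := abs_nonneg N
    nlinarith [mul_le_mul_of_nonneg_left (le_abs_self N) hl0, mul_nonneg hl0 (abs_nonneg N)]
  have h4 := mul_le_mul_of_nonneg_right h2 (abs_nonneg N)
  have h5 := mul_le_mul_of_nonneg_right hηN hs
  nlinarith

lemma not_wf {n : ℕ} {Φ Φt : (Fin n → ℂ) → ℝ} {a : ℂ}
    {Ψ : (Fin n → ℂ) → (Fin n → ℂ) → ℂ} {R : (Fin n → ℂ) → (Fin n → ℂ) → ℝ}
    (hre : ∀ z w : Fin n → ℂ, 2 * (Ψ z (star w)).re = Φt z + Φ w - R z w)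
    {u : (Fin n → ℂ) → ℂ} {z₀ : Fin n → ℂ} (V : Set (Fin n → ℂ)) (hV : IsOpen V)
    (hVc : IsConic V) (h0 : (0 : Fin n → ℂ) ∉ V) (hz : z₀ ∈ V) (A ε : ℝ) (hA : 0 < A) (hε : 0 < ε)
    (hb : ∀ z ∈ V, ∀ w, ‖u w‖ ≤
      A * Real.exp (Φ w + (Φ z - Φt z) + R z w - ε * (eSq z + eSq w))) :
    z₀ ∉ wf Φ (berg a Ψ Φ u) := by
  rintro ⟨-, h⟩
  apply h
  refine ⟨V, hV, hVc, h0, hz, ‖a‖ * (A * ∫ w : Fin n → ℂ, Real.exp (-ε * eSq w)) + 1, ε, ?_, hε, ?_⟩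
  · have : 0 ≤ ∫ w : Fin n → ℂ, Real.exp (-ε * eSq w) :=
      integral_nonneg fun w => (Real.exp_pos _).le
    positivity
  intro z hzV
  have key : ‖∫ w : Fin n → ℂ, Complex.exp (2 * Ψ z (star w)) * u w * (Real.exp (-2 * Φ w) : ℂ)‖
      ≤ ∫ w : Fin n → ℂ, (A * Real.exp (Φ z - ε * eSq z)) * Real.exp (-ε * eSq w) := by
    refine norm_integral_le_of_norm_le ((gauss_int hε).const_mul _)
      (Filter.Eventually.of_forall fun w => ?_)
    rw [norm_mul, norm_mul, Complex.norm_exp, Complex.norm_real, Real.norm_eq_abs,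
      abs_of_pos (Real.exp_pos _)]
    have : (2 * Ψ z (star w)).re = Φt z + Φ w - R z w := by
      rw [← hre]; simp
    rw [this]
    calc _ ≤ Real.exp (Φt z + Φ w - R z w) *
          (A * Real.exp (Φ w + (Φ z - Φt z) + R z w - ε * (eSq z + eSq w))) *
            Real.exp (-2 * Φ w) := by
          gcongr
          exact hb z hzV w
      _ = A * (Real.exp (Φt z + Φ w - R z w) *
          Real.exp (Φ w + (Φ z - Φt z) + R z w - ε * (eSq z + eSq w)) *
            Real.exp (-2 * Φ w)) := by ring
      _ = A * (Real.exp (Φ z - ε * eSq z) * Real.exp (-ε * eSq w)) := by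
          rw [← Real.exp_add, ← Real.exp_add, ← Real.exp_add]
          congr 2; ring
      _ = _ := by ring
  rw [integral_const_mul] at key
  unfold berg
  rw [norm_mul]
  have h2 := mul_le_mul_of_nonneg_left key (norm_nonneg a)
  have := Real.exp_pos (Φ z - ε * eSq z)
  nlinarith

/-- Under the same Bergman-form hypotheses as Statements 9 and 10,
`WF^{1/2}_Φ(Gu) ⊆ κ♭(WF^{1/2}_Φ(u)) ∩ Rad(Φ − Φ̃)`, where
`Rad(Φ − Φ̃) = {z : Φ(z) − Φ̃(z) = 0}`. -/
theorem stmt_11 (n : ℕ) (hn : 1 ≤ n) (Φ Φt : (Fin n → ℂ) → ℝ)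
    (hΦ : IsSPSH Φ) (hΦt : IsSPSH Φt) (hle : ∀ z, Φt z ≤ Φ z)
    (κ : (Fin n → ℂ) ≃ₗ[ℝ] (Fin n → ℂ)) (a : ℂ)
    (Ψ : (Fin n → ℂ) → (Fin n → ℂ) → ℂ) (hΨ : IsCQuad2 Ψ)
    (R : (Fin n → ℂ) → (Fin n → ℂ) → ℝ) (hRq : IsRQuadPair R)
    (hR0 : ∀ z w, 0 ≤ R z w)
    (hre : ∀ z w : Fin n → ℂ, 2 * (Ψ z (star w)).re = Φt z + Φ w - R z w)
    (C c : ℝ) (hC : 0 < C) (hc : 0 < c)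
    (hsand : ∀ z w : Fin n → ℂ, c * eSq (z - κ w) ≤ R z w ∧ R z w ≤ C * eSq (z - κ w))
    (u : (Fin n → ℂ) → ℂ) (hu : Differentiable ℂ u)
    (C₀ N : ℝ) (hC₀ : 0 < C₀)
    (hg : ∀ w : Fin n → ℂ, ‖u w‖ ≤ C₀ * jb w ^ N * Real.exp (Φ w)) :
    wf Φ (berg a Ψ Φ u) ⊆
      ((fun w => κ w) '' wf Φ u) ∩ {z : Fin n → ℂ | Φ z - Φt z = 0} := by
  rintro z₀ hz₀
  have hz0 : z₀ ≠ 0 := hz₀.1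
  have hκc : Continuous κ := LinearMap.continuous_of_finiteDimensional κ.toLinearMap
  have hκs : Continuous κ.symm := LinearMap.continuous_of_finiteDimensional κ.symm.toLinearMap
  have hFc : Continuous fun p : (Fin n → ℂ) × (Fin n → ℂ) => c * eSq (p.1 - κ p.2) :=
    continuous_const.mul (eSq_cont.comp (continuous_fst.sub (hκc.comp continuous_snd)))
  have hFs : ∀ (t : ℝ) (p : (Fin n → ℂ) × (Fin n → ℂ)),
      c * eSq ((t • p).1 - κ (t • p).2) = t ^ 2 * (c * eSq (p.1 - κ p.2)) := by
    intro t p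
    rw [Prod.smul_fst, Prod.smul_snd, map_smul, ← smul_sub, eSq_smul]; ring
  refine ⟨?_, ?_⟩
  · refine ⟨κ.symm z₀, ?_, by simp⟩
    have hw0 : κ.symm z₀ ≠ 0 := by simpa using hz0
    refine ⟨hw0, ?_⟩
    rintro ⟨V, hV, hVc, hV0, hwV, C', c', hC', hc', hub⟩
    have hκV : IsOpen (κ.symm ⁻¹' V) := hV.preimage hκs
    obtain ⟨ρ, hρ, hball⟩ := Metric.isOpen_iff.mp hκV z₀ hwV
    have hn0 : 0 < ‖z₀‖ := norm_pos_iff.mpr hz0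
    have hcone : ∀ z : Fin n → ℂ, z ≠ 0 → ‖‖z₀‖ • z - ‖z‖ • z₀‖ ≤ ρ / 2 * ‖z‖ → κ.symm z ∈ V := by
      intro z hz h
      have hnz : 0 < ‖z‖ := norm_pos_iff.mpr hz
      have h1 : (‖z‖⁻¹ * ‖z₀‖) • z ∈ Metric.ball z₀ ρ := by
        rw [Metric.mem_ball, dist_eq_norm]
        have : (‖z‖⁻¹ * ‖z₀‖) • z - z₀ = ‖z‖⁻¹ • (‖z₀‖ • z - ‖z‖ • z₀) := by
          rw [smul_sub, smul_smul, smul_smul, inv_mul_cancel₀ hnz.ne', one_smul]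
        rw [this, norm_smul, norm_inv, norm_norm]
        calc _ ≤ ‖z‖⁻¹ * (ρ / 2 * ‖z‖) := by gcongr
          _ = ρ / 2 := by field_simp
          _ < ρ := by linarith
      have h2 := hball h1
      rw [Set.mem_preimage, map_smul] at h2
      have h3 := hVc _ h2 (‖z‖⁻¹ * ‖z₀‖)⁻¹ (by positivity)
      rwa [smul_smul, inv_mul_cancel₀ (by positivity), one_smul] at h3
    obtain ⟨ε₁, hε₁, hb₁⟩ := cone_bound
      {p : (Fin n → ℂ) × (Fin n → ℂ) | ‖‖z₀‖ • p.1 - ‖p.1‖ • z₀‖ ≤ ρ / 2 * ‖p.1‖ ∧ p.2 ∉ V}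
      (by
        have e1 : IsClosed {p : (Fin n → ℂ) × (Fin n → ℂ) |
            ‖‖z₀‖ • p.1 - ‖p.1‖ • z₀‖ ≤ ρ / 2 * ‖p.1‖} :=
          isClosed_le (by fun_prop) (by fun_prop)
        exact e1.inter (hV.isClosed_compl.preimage continuous_snd))
      (by
        rintro p ⟨h1, h2⟩ t ht
        refine ⟨?_, fun h => h2 ?_⟩
        · have : ‖z₀‖ • (t • p).1 - ‖(t • p).1‖ • z₀ = t • (‖z₀‖ • p.1 - ‖p.1‖ • z₀) := by
            rw [Prod.smul_fst, norm_smul, Real.norm_of_nonneg ht.le, smul_sub, smul_smul, smul_smul,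
              smul_smul, mul_comm t, mul_comm t]
          rw [this, Prod.smul_fst, norm_smul, norm_smul, Real.norm_of_nonneg ht.le]
          nlinarith
        · have := hVc _ h t⁻¹ (inv_pos.mpr ht)
          rwa [Prod.smul_snd, smul_smul, inv_mul_cancel₀ ht.ne', one_smul] at this)
      (fun p => c * eSq (p.1 - κ p.2)) hFc hFs
      (by
        rintro ⟨z, w⟩ ⟨h1, h2⟩ hp
        refine mul_pos hc (eSq_pos fun h => ?_)
        simp only at h h1 h2
        have hzw : z = κ w := sub_eq_zero.mp h
        have hz : z ≠ 0 := by
          rintro rfl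
          have : w = 0 := by simpa using hzw.symm
          exact hp (by simp [this])
        apply h2
        have := hcone z hz h1
        rwa [hzw, κ.symm_apply_apply] at this)
    obtain ⟨ε₂, hε₂, hb₂⟩ := cone_bound (Set.univ : Set ((Fin n → ℂ) × (Fin n → ℂ))) isClosed_univ
      (fun _ _ _ _ => trivial) (fun p => c * eSq (p.1 - κ p.2) + c' * eSq p.2)
      (hFc.add (continuous_const.mul (eSq_cont.comp continuous_snd)))
      (by
        intro t p
        have h1 := hFs t p
        have h2 : eSq (t • p).2 = t ^ 2 * eSq p.2 := by rw [Prod.smul_snd, eSq_smul]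
        simp only [h1, h2]; ring)
      (by
        rintro ⟨z, w⟩ - hp
        have e1 := eSq_nonneg (z - κ w)
        by_cases hw : w = 0
        · have hz : z ≠ 0 := by rintro rfl; exact hp (by simp [hw])
          have := eSq_pos hz
          have e2 := eSq_nonneg w
          have : 0 < eSq (z - κ w) := by simpa [hw] using this
          simp only; positivity
        · have := eSq_pos hw
          simp only; positivity)
    obtain ⟨A, hA, hjb⟩ := jb_bound (n := n) N (ε₁ / 2) (by positivity)
    set ε := min (ε₁ / 2) ε₂ with hεdef
    have hεp : 0 < ε := lt_min (by positivity) hε₂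
    have hεa : ε ≤ ε₁ / 2 := min_le_left _ _
    have hεb : ε ≤ ε₂ := min_le_right _ _
    refine not_wf hre (z₀ := z₀)
      {z : Fin n → ℂ | ‖‖z₀‖ • z - ‖z‖ • z₀‖ < ρ / 2 * ‖z‖} (isOpen_lt (by fun_prop) (by fun_prop))
      ?_ (by simp) ?_ (C₀ * A + C') ε (by positivity) hεp ?_ hz₀
    · intro z hz t ht
      have : ‖z₀‖ • (t • z) - ‖t • z‖ • z₀ = t • (‖z₀‖ • z - ‖z‖ • z₀) := by
        rw [norm_smul, Real.norm_of_nonneg ht.le, smul_sub, smul_smul, smul_smul,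
          smul_smul, mul_comm t, mul_comm t]
      simp only [Set.mem_setOf_eq] at hz ⊢
      rw [this, norm_smul, norm_smul, Real.norm_of_nonneg ht.le]
      nlinarith
    · simp only [Set.mem_setOf_eq, sub_self, norm_zero]
      positivity
    · intro z hz w
      have hR := (hsand z w).1
      have hl := hle z
      have s1 := eSq_nonneg z
      have s2 := eSq_nonneg w
      have m1 := mul_le_mul_of_nonneg_right hεa (add_nonneg s1 s2)
      have m2 := mul_le_mul_of_nonneg_right hεb (add_nonneg s1 s2)
      by_cases hw : w ∈ V
      · calc ‖u w‖ ≤ C' * Real.exp (Φ w - c' * eSq w) := hub w hw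
          _ ≤ _ := by
            have hb := hb₂ (z, w) trivial
            simp only at hb
            refine mul_le_mul (by nlinarith [mul_pos hC₀ hA]) (Real.exp_le_exp.mpr ?_)
              (Real.exp_pos _).le (by positivity)
            linarith
      · calc ‖u w‖ ≤ C₀ * jb w ^ N * Real.exp (Φ w) := hg w
          _ ≤ C₀ * (A * Real.exp (ε₁ / 2 * eSq w)) * Real.exp (Φ w) := by
            gcongr; exact hjb w
          _ = C₀ * A * Real.exp (ε₁ / 2 * eSq w + Φ w) := by rw [Real.exp_add]; ring
          _ ≤ _ := by
            have hb := hb₁ (z, w) ⟨le_of_lt hz, hw⟩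
            simp only at hb
            refine mul_le_mul (by linarith) (Real.exp_le_exp.mpr ?_)
              (Real.exp_pos _).le (by positivity)
            nlinarith
  · by_contra hne
    have hQ : 0 < Φ z₀ - Φt z₀ := lt_of_le_of_ne (by linarith [hle z₀]) (Ne.symm hne)
    have he := eSq_pos hz0
    set δ := (Φ z₀ - Φt z₀) / (2 * eSq z₀) with hδ
    have hδp : 0 < δ := by positivity
    obtain ⟨ε₂, hε₂, hb₂⟩ := cone_bound (Set.univ : Set ((Fin n → ℂ) × (Fin n → ℂ))) isClosed_univ
      (fun _ _ _ _ => trivial) (fun p => c * eSq (p.1 - κ p.2) + δ * eSq p.1)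
      (hFc.add (continuous_const.mul (eSq_cont.comp continuous_fst)))
      (by
        intro t p
        have h1 := hFs t p
        have h2 : eSq (t • p).1 = t ^ 2 * eSq p.1 := by rw [Prod.smul_fst, eSq_smul]
        simp only [h1, h2]; ring)
      (by
        rintro ⟨z, w⟩ - hp
        have e1 := eSq_nonneg (z - κ w)
        by_cases hz : z = 0
        · have hw : w ≠ 0 := by rintro rfl; exact hp (by simp [hz])
          have e2 := eSq_nonneg z
          have : 0 < eSq (z - κ w) := eSq_pos (by simpa [hz] using hw)
          simp only; positivity
        · have := eSq_pos hz
          simp only; positivity)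
    obtain ⟨A, hA, hjb⟩ := jb_bound (n := n) N (ε₂ / 2) (by positivity)
    refine not_wf hre (z₀ := z₀) {z : Fin n → ℂ | δ * eSq z < Φ z - Φt z}
      (isOpen_lt (continuous_const.mul eSq_cont) ((rquad_cont hΦ.1).sub (rquad_cont hΦt.1)))
      ?_ ?_ ?_ (C₀ * A) (ε₂ / 2) (by positivity) (by positivity) ?_ hz₀
    · intro z hz t ht
      simp only [Set.mem_setOf_eq] at hz ⊢
      rw [eSq_smul, rquad_smul hΦ.1, rquad_smul hΦt.1]
      have := mul_lt_mul_of_pos_left hz (pow_pos ht 2)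
      linarith
    · have h1 := rquad_smul hΦ.1 0 0
      have h2 := rquad_smul hΦt.1 0 0
      have h3 : eSq (0 : Fin n → ℂ) = 0 := by simp [eSq]
      simp at h1 h2
      simp [h1, h2, h3]
    · have : δ * eSq z₀ = (Φ z₀ - Φt z₀) / 2 := by rw [hδ]; field_simp
      simp only [Set.mem_setOf_eq]
      linarith
    · intro z hz w
      have hR := (hsand z w).1
      have s1 := eSq_nonneg z
      have s2 := eSq_nonneg w
      simp only [Set.mem_setOf_eq] at hz
      calc ‖u w‖ ≤ C₀ * jb w ^ N * Real.exp (Φ w) := hg w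
        _ ≤ C₀ * (A * Real.exp (ε₂ / 2 * eSq w)) * Real.exp (Φ w) := by
          gcongr; exact hjb w
        _ = C₀ * A * Real.exp (ε₂ / 2 * eSq w + Φ w) := by rw [Real.exp_add]; ring
        _ ≤ _ := by
          have hb := hb₂ (z, w) trivial
          simp only at hb
          refine mul_le_mul_of_nonneg_left (Real.exp_le_exp.mpr ?_) (by positivity)
          nlinarith
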